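/- For all n ≥ 2, (1/(16·2^{1/5})) · n^{3/5} ≤ t^(2)(n) ≤ (e/2^{1/3}) · n^{2/3}; that is, every ordered 2-matching of size n contains twins of size at least (1/(16·2^{1/5}))·n^{3/5}, and there exists an ordered 2-matching of size n with no twins of size exceeding (e/2^{1/3})·n^{2/3}. -/

import Mathlib

/-- A (sub-)matching: a finite set of pairwise disjoint `r`-element subsets
("edges") of the linearly ordered vertex set `ℕ`. -/
def IsMatching (r : ℕ) (M : Finset (Finset ℕ)) : Prop :=
  (∀ e ∈ M, e.card = r) ∧ ∀ e ∈ M, ∀ f ∈ M, e ≠ f → Disjoint e f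

/-- The vertex support of a matching: the union of its edges. -/
def mSupport (M : Finset (Finset ℕ)) : Finset ℕ := M.sup id

/-- An ordered `r`-matching of size `n`: `n` pairwise disjoint `r`-element edges
partitioning `[rn] = {1, …, rn}`. -/
def IsOrderedMatching (r n : ℕ) (M : Finset (Finset ℕ)) : Prop :=
  IsMatching r M ∧ M.card = n ∧ mSupport M = Finset.Icc 1 (r * n)

/-- Two ordered matchings are isomorphic if some (equivalently, the unique)
order-preserving bijection between their vertex supports maps edges onto edges. -/
def MatchIso (M N : Finset (Finset ℕ)) : Prop :=
  ∃ f : ℕ → ℕ, Set.BijOn f (mSupport M : Set ℕ) (mSupport N : Set ℕ) ∧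
    (∀ x ∈ mSupport M, ∀ y ∈ mSupport M, x < y → f x < f y) ∧
    N = M.image fun e => e.image f

/-- `M` contains twins of size `k`: a pair of vertex-disjoint isomorphic
sub-matchings of `M`, each with `k` edges. -/
def HasTwins (M : Finset (Finset ℕ)) (k : ℕ) : Prop :=
  ∃ M₁ M₂ : Finset (Finset ℕ), M₁ ⊆ M ∧ M₂ ⊆ M ∧
    Disjoint (mSupport M₁) (mSupport M₂) ∧ MatchIso M₁ M₂ ∧
    M₁.card = k ∧ M₂.card = k

/-- `t(M)`: the maximum size of twins in `M`. -/
noncomputable def twinMax (M : Finset (Finset ℕ)) : ℕ := sSup {k | HasTwins M k}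

/-- `t^(r)(n)`: the minimum of `t(M)` over all ordered `r`-matchings of size `n`. -/
noncomputable def minTwins (r n : ℕ) : ℕ :=
  sInf {t | ∃ M, IsOrderedMatching r n M ∧ twinMax M = t}

/-- A permutation `π` of `[n]` has twins of length `k`: two order-isomorphic
subsequences occupying disjoint sets of positions. -/
def PermTwins {n : ℕ} (π : Equiv.Perm (Fin n)) (k : ℕ) : Prop :=
  ∃ a b : Fin k → Fin n, StrictMono a ∧ StrictMono b ∧
    (∀ i j, a i ≠ b j) ∧ ∀ i j, (π (a i) < π (a j) ↔ π (b i) < π (b j))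

/-- `τ(n)`: the largest `k` such that every permutation of `[n]` has twins of length `k`. -/
noncomputable def permTau (n : ℕ) : ℕ :=
  sSup {k | ∀ π : Equiv.Perm (Fin n), PermTwins π k}

/-- An `r`-pattern, represented by its canonical representative: an ordered
`r`-matching of size `2` (on the vertex set `[2r]`). Every isomorphism class of
ordered `r`-matchings of size `2` contains exactly one such representative. -/
def IsPattern (r : ℕ) (P : Finset (Finset ℕ)) : Prop := IsOrderedMatching r 2 P

/-- A `P`-clique: a matching all of whose pairs of (distinct) edges form the pattern `P`. -/
def IsPClique (P M : Finset (Finset ℕ)) : Prop :=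
  ∀ e ∈ M, ∀ f ∈ M, e ≠ f → MatchIso {e, f} P

/-- `L(M)`: the size of the largest sub-matching of `M` that is a `P`-clique,
over all `r`-patterns `P`. -/
noncomputable def cliqueMax (r : ℕ) (M : Finset (Finset ℕ)) : ℕ :=
  sSup {k | ∃ P, IsPattern r P ∧ ∃ M' ⊆ M, IsPClique P M' ∧ M'.card = k}

/-- `L_r(n)`: the minimum of `L(M)` over all ordered `r`-matchings of size `n`. -/
noncomputable def minClique (r n : ℕ) : ℕ :=
  sInf {l | ∃ M, IsOrderedMatching r n M ∧ cliqueMax r M = l}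

section Upper

/-- An order-preserving rearrangement of a finite injective sequence is trivial. -/
lemma perm_eq_one_of_order {K Q : Type*} [Finite K] [LinearOrder Q] (h : K → Q)
    (hinj : Function.Injective h) (θ : Equiv.Perm K)
    (hθ : ∀ a b, h a < h b ↔ h (θ a) < h (θ b)) : θ = 1 := by
  let _ : LinearOrder K := LinearOrder.lift' h hinj
  have hlt : ∀ a b : K, a < b ↔ h a < h b := fun a b => Iff.rfl
  have hle : ∀ a b : K, a ≤ b ↔ h a ≤ h b := fun a b => Iff.rfl
  have hrel : ∀ {a b : K}, θ a ≤ θ b ↔ a ≤ b := by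
    intro a b
    rw [hle, hle, ← not_lt, ← not_lt, ← hθ]
  let o : K ≃o K := ⟨θ, hrel⟩
  have : o = OrderIso.refl K := Subsingleton.elim _ _
  ext a
  exact congrArg (fun f : K ≃o K => f a) this

/-- Probability that two fixed disjoint index sequences are mapped to order-isomorphic sequences. -/
lemma count_iso {K P Q : Type*} [Fintype K] [Fintype P] [Fintype Q] [DecidableEq K] [DecidableEq P]
    [DecidableEq Q] [LinearOrder Q] (u v : K → P) (hu : Function.Injective u)
    (huv : ∀ a b, u a ≠ v b) (A : Finset (P ≃ Q))
    (hA : ∀ σ ∈ A, ∀ a b, σ (u a) < σ (u b) ↔ σ (v a) < σ (v b)) :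
    A.card * (Fintype.card K).factorial ≤ Fintype.card (P ≃ Q) := by
  classical
  rw [← Fintype.card_perm, ← Finset.card_univ, ← Finset.card_product, ← Finset.card_univ]
  let ι : K ↪ P := ⟨u, hu⟩
  have hvia : ∀ (τ : Equiv.Perm K) a, τ.viaEmbedding ι (u a) = u (τ a) := fun τ a =>
    Equiv.Perm.viaEmbedding_apply τ ι a
  have hvia' : ∀ (τ : Equiv.Perm K) a, τ.viaEmbedding ι (v a) = v a := fun τ a =>
    Equiv.Perm.viaEmbedding_apply_of_notMem τ ι _ (by rintro ⟨b, hb⟩; exact huv b a hb)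
  refine Finset.card_le_card_of_injOn (fun p => (p.2.viaEmbedding ι).trans p.1) (by simp) ?_
  rintro ⟨σ, τ⟩ h1 ⟨σ', τ'⟩ h2 heq
  simp only [Finset.coe_product, Set.mem_prod, Finset.mem_coe] at h1 h2
  have heq' : ∀ p, σ (τ.viaEmbedding ι p) = σ' (τ'.viaEmbedding ι p) := fun p =>
    congrArg (fun f : P ≃ Q => f p) heq
  have hv : ∀ a, σ (v a) = σ' (v a) := by
    intro a; have := heq' (v a); rwa [hvia', hvia'] at this
  have huu : ∀ a, σ (u (τ a)) = σ' (u (τ' a)) := by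
    intro a; have := heq' (u a); rwa [hvia, hvia] at this
  have hθ : τ * τ'⁻¹ = 1 := by
    apply perm_eq_one_of_order (fun a => σ (u a)) (σ.injective.comp hu)
    intro a b
    have e : ∀ a, σ (u ((τ * τ'⁻¹) a)) = σ' (u a) := by
      intro a
      rw [Equiv.Perm.mul_apply, huu]; simp
    rw [e, e, hA σ h1.1, hv, hv, ← hA σ' h2.1]
  have hττ : τ = τ' := mul_inv_eq_one.mp hθ
  subst hττ
  congr 1
  ext p
  have := heq' ((τ.viaEmbedding ι).symm p)
  simpa using this

/-- The edge with index `i` of the matching coded by `σ`. -/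
def codeEdge {n : ℕ} (σ : Fin n × Bool ≃ Fin (2 * n)) (i : Fin n) : Finset ℕ :=
  {(σ (i, false)).val + 1, (σ (i, true)).val + 1}

/-- The matching coded by `σ`. -/
def codeMatching {n : ℕ} (σ : Fin n × Bool ≃ Fin (2 * n)) : Finset (Finset ℕ) :=
  Finset.univ.image (codeEdge σ)

lemma mem_codeEdge {n : ℕ} (σ : Fin n × Bool ≃ Fin (2 * n)) (i : Fin n) (x : ℕ) :
    x ∈ codeEdge σ i ↔ ∃ s, x = (σ (i, s)).val + 1 := by
  simp [codeEdge]

lemma mem_mSupport (M : Finset (Finset ℕ)) (x : ℕ) : x ∈ mSupport M ↔ ∃ e ∈ M, x ∈ e := by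
  simp [mSupport, Finset.mem_sup]

lemma codeVertex_inj {n : ℕ} (σ : Fin n × Bool ≃ Fin (2 * n)) {p q : Fin n × Bool}
    (h : (σ p).val + 1 = (σ q).val + 1) : p = q := by
  apply σ.injective; apply Fin.ext; omega

lemma codeEdge_inj {n : ℕ} (σ : Fin n × Bool ≃ Fin (2 * n)) :
    Function.Injective (codeEdge σ) := by
  intro i j h
  have : (σ (i, false)).val + 1 ∈ codeEdge σ j := by
    rw [← h, mem_codeEdge]; exact ⟨_, rfl⟩
  obtain ⟨s, hs⟩ := (mem_codeEdge _ _ _).1 this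
  exact congrArg Prod.fst (codeVertex_inj σ hs)

lemma codeMatching_isOrdered {n : ℕ} (σ : Fin n × Bool ≃ Fin (2 * n)) :
    IsOrderedMatching 2 n (codeMatching σ) := by
  refine ⟨⟨?_, ?_⟩, ?_, ?_⟩
  · intro e he
    obtain ⟨i, -, rfl⟩ := Finset.mem_image.1 he
    refine Finset.card_pair ?_
    intro h
    have := codeVertex_inj σ h
    simp at this
  · intro e he f hf hne
    obtain ⟨i, -, rfl⟩ := Finset.mem_image.1 he
    obtain ⟨j, -, rfl⟩ := Finset.mem_image.1 hf
    rw [Finset.disjoint_left]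
    intro x hx hx'
    obtain ⟨s, hs⟩ := (mem_codeEdge _ _ _).1 hx
    obtain ⟨s', hs'⟩ := (mem_codeEdge _ _ _).1 hx'
    have := codeVertex_inj σ (hs.symm.trans hs')
    apply hne
    have hij : i = j := congrArg Prod.fst this
    rw [hij]
  · rw [codeMatching, Finset.card_image_of_injective _ (codeEdge_inj σ)]; simp
  · ext x
    rw [mem_mSupport, Finset.mem_Icc]
    constructor
    · rintro ⟨e, he, hx⟩
      obtain ⟨i, -, rfl⟩ := Finset.mem_image.1 he
      obtain ⟨s, hs⟩ := (mem_codeEdge _ _ _).1 hx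
      have := (σ (i, s)).isLt
      omega
    · rintro ⟨h1, h2⟩
      let y : Fin (2 * n) := ⟨x - 1, by omega⟩
      refine ⟨codeEdge σ (σ.symm y).1, Finset.mem_image_of_mem _ (Finset.mem_univ _), ?_⟩
      rw [mem_codeEdge]
      refine ⟨(σ.symm y).2, ?_⟩
      simp [y]; omega

/-- The event that the data `d` witnesses twins in the matching coded by `σ`. -/
def Witness {n k : ℕ} (σ : Fin n × Bool ≃ Fin (2 * n))
    (d : Finset (Fin n) × (Fin k → Fin n) × (Fin k → Bool)) : Prop :=
  ∃ h : d.1.card = k,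
    (∀ a b : Fin k, d.1.orderEmbOfFin h a ≠ d.2.1 b) ∧
    ∀ a b : Fin k × Bool,
      σ (d.1.orderEmbOfFin h a.1, a.2) < σ (d.1.orderEmbOfFin h b.1, b.2) ↔
      σ (d.2.1 a.1, xor a.2 (d.2.2 a.1)) < σ (d.2.1 b.1, xor b.2 (d.2.2 b.1))

lemma exists_witness {n k : ℕ} (σ : Fin n × Bool ≃ Fin (2 * n)) (h : HasTwins (codeMatching σ) k) :
    ∃ d : Finset (Fin n) × (Fin k → Fin n) × (Fin k → Bool), Witness σ d := by
  classical
  obtain ⟨M₁, M₂, hM₁, hM₂, hdis, ⟨f, hbij, hmono, himg⟩, hc1, hc2⟩ := h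
  let I : Finset (Fin n) := Finset.univ.filter (fun i => codeEdge σ i ∈ M₁)
  have hI : I.image (codeEdge σ) = M₁ := by
    ext e
    simp only [I, Finset.mem_image, Finset.mem_filter, Finset.mem_univ, true_and]
    constructor
    · rintro ⟨i, hi, rfl⟩; exact hi
    · intro he
      obtain ⟨i, -, rfl⟩ := Finset.mem_image.1 (hM₁ he)
      exact ⟨i, he, rfl⟩
  have hIc : I.card = k := by
    rw [← hc1, ← hI, Finset.card_image_of_injective _ (codeEdge_inj σ)]
  have hsup : ∀ i ∈ I, ∀ s, (σ (i, s)).val + 1 ∈ mSupport M₁ := by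
    intro i hi s
    rw [mem_mSupport]
    exact ⟨codeEdge σ i, (Finset.mem_filter.1 hi).2, (mem_codeEdge _ _ _).2 ⟨s, rfl⟩⟩
  have key : ∀ i ∈ I, ∃ (j : Fin n) (b : Bool), codeEdge σ j ∈ M₂ ∧
      ∀ s, f ((σ (i, s)).val + 1) = (σ (j, xor s b)).val + 1 := by
    intro i hi
    have h1 : (codeEdge σ i).image f ∈ M₂ := by
      rw [himg]; exact Finset.mem_image_of_mem _ (Finset.mem_filter.1 hi).2
    obtain ⟨j, -, hj⟩ := Finset.mem_image.1 (hM₂ h1)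
    have hf : ∀ s, ∃ s', f ((σ (i, s)).val + 1) = (σ (j, s')).val + 1 := by
      intro s
      rw [← mem_codeEdge, hj]
      exact Finset.mem_image_of_mem _ ((mem_codeEdge _ _ _).2 ⟨s, rfl⟩)
    obtain ⟨s0, h0⟩ := hf false
    obtain ⟨s1, h1'⟩ := hf true
    have hne : s0 ≠ s1 := by
      rintro rfl
      have := hbij.injOn (hsup i hi false) (hsup i hi true) (h0.trans h1'.symm)
      have := codeVertex_inj σ this
      simp at this
    refine ⟨j, s0, hj ▸ h1, ?_⟩
    intro s
    cases s
    · simpa using h0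
    · rw [h1']
      have : s1 = xor true s0 := by revert hne; cases s0 <;> cases s1 <;> simp
      rw [this]
  choose! J B hJ hB using key
  let i : Fin k → Fin n := fun a => I.orderEmbOfFin hIc a
  have hi : ∀ a, i a ∈ I := fun a => Finset.orderEmbOfFin_mem _ _ _
  refine ⟨⟨I, fun a => J (i a), fun a => B (i a)⟩, hIc, ?_, ?_⟩
  · intro a b heq
    have h1 : (σ (i a, false)).val + 1 ∈ mSupport M₁ := hsup _ (hi a) _
    have h2 : (σ (i a, false)).val + 1 ∈ mSupport M₂ := by
      rw [mem_mSupport]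
      refine ⟨_, hJ _ (hi b), ?_⟩
      rw [mem_codeEdge]
      refine ⟨false, ?_⟩
      have heq' : i a = J (i b) := heq
      rw [← heq']
    exact Finset.disjoint_left.1 hdis h1 h2
  · intro a b
    have m : ∀ a b : Fin k × Bool, σ (i a.1, a.2) < σ (i b.1, b.2) →
        f ((σ (i a.1, a.2)).val + 1) < f ((σ (i b.1, b.2)).val + 1) := by
      intro a b hab
      apply hmono _ (hsup _ (hi _) _) _ (hsup _ (hi _) _)
      have : (σ (i a.1, a.2)).val < (σ (i b.1, b.2)).val := hab
      omega
    have e : ∀ a : Fin k × Bool, f ((σ (i a.1, a.2)).val + 1) =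
        (σ (J (i a.1), xor a.2 (B (i a.1)))).val + 1 := fun a => hB _ (hi _) _
    show σ (i a.1, a.2) < σ (i b.1, b.2) ↔ σ (J (i a.1), xor a.2 (B (i a.1))) <
      σ (J (i b.1), xor b.2 (B (i b.1)))
    constructor
    · intro h
      have := m a b h
      rw [e, e] at this
      rw [Fin.lt_def]; omega
    · intro h
      by_contra hcon
      rcases (not_lt.1 hcon).lt_or_eq with h' | h'
      · have := m b a h'
        rw [e, e] at this
        rw [Fin.lt_def] at h; omega
      · have e1 := e a
        have e2 := e b
        rw [← h', e2] at e1
        rw [Fin.lt_def] at h; omega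

/-- First moment argument. -/
lemma exists_no_twins {n k : ℕ} (hk : (2 * n ^ 2) ^ k < k.factorial * (2 * k).factorial) :
    ∃ σ : Fin n × Bool ≃ Fin (2 * n), ¬ HasTwins (codeMatching σ) k := by
  classical
  by_contra! hcon
  let D : Finset (Finset (Fin n) × (Fin k → Fin n) × (Fin k → Bool)) :=
    (Finset.powersetCard k Finset.univ) ×ˢ Finset.univ
  have hDc : D.card = n.choose k * (n ^ k * 2 ^ k) := by
    simp [D, Finset.card_product]
  let A := fun d : Finset (Fin n) × (Fin k → Fin n) × (Fin k → Bool) =>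
    (Finset.univ : Finset (Fin n × Bool ≃ Fin (2 * n))).filter (fun σ => Witness σ d)
  have hA : ∀ d, (A d).card * (2 * k).factorial ≤ Fintype.card (Fin n × Bool ≃ Fin (2 * n)) := by
    intro d
    rcases (A d).eq_empty_or_nonempty with h0 | ⟨σ, hσ⟩
    · simp [h0]
    · obtain ⟨h, h1, -⟩ := (Finset.mem_filter.1 hσ).2
      have := count_iso (K := Fin k × Bool) (P := Fin n × Bool) (Q := Fin (2 * n))
        (fun a => (d.1.orderEmbOfFin h a.1, a.2)) (fun a => (d.2.1 a.1, xor a.2 (d.2.2 a.1)))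
        (by
          rintro ⟨a, s⟩ ⟨b, t⟩ hab
          simp only [Prod.mk.injEq] at hab
          have := (d.1.orderEmbOfFin h).injective hab.1
          simp [this, hab.2])
        (by
          intro a b hab
          exact h1 a.1 b.1 (congrArg Prod.fst hab)) (A d)
        (by
          intro σ hσ a b
          obtain ⟨h', -, h2⟩ := (Finset.mem_filter.1 hσ).2
          exact h2 a b)
      have hc : Fintype.card (Fin k × Bool) = 2 * k := by simp [mul_comm]
      rwa [hc] at this
  have hcov : (Finset.univ : Finset (Fin n × Bool ≃ Fin (2 * n))) ⊆ D.biUnion A := by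
    intro σ _
    obtain ⟨d, hd⟩ := exists_witness σ (hcon σ)
    refine Finset.mem_biUnion.2 ⟨d, ?_, Finset.mem_filter.2 ⟨Finset.mem_univ _, hd⟩⟩
    obtain ⟨h, -⟩ := hd
    simp [D, Finset.mem_powersetCard, h]
  have hpos : 0 < Fintype.card (Fin n × Bool ≃ Fin (2 * n)) := by
    refine Fintype.card_pos_iff.2 ⟨Fintype.equivOfCardEq ?_⟩
    simp [mul_comm]
  set F := Fintype.card (Fin n × Bool ≃ Fin (2 * n)) with hF
  have h1 : F * (2 * k).factorial ≤ D.card * F := by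
    calc F * (2 * k).factorial ≤ (∑ d ∈ D, (A d).card) * (2 * k).factorial := by
          gcongr
          rw [hF, ← Finset.card_univ]
          exact (Finset.card_le_card hcov).trans Finset.card_biUnion_le
      _ = ∑ d ∈ D, (A d).card * (2 * k).factorial := by rw [Finset.sum_mul]
      _ ≤ ∑ d ∈ D, F := Finset.sum_le_sum fun d _ => hA d
      _ = D.card * F := by simp
  have h2 : (2 * k).factorial ≤ D.card := by
    rw [mul_comm] at h1
    exact Nat.le_of_mul_le_mul_right h1 hpos
  have h3 : k.factorial * n.choose k ≤ n ^ k := by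
    rw [← Nat.descFactorial_eq_factorial_mul_choose]
    exact Nat.descFactorial_le_pow n k
  have : k.factorial * (2 * k).factorial ≤ (2 * n ^ 2) ^ k := by
    calc k.factorial * (2 * k).factorial ≤ k.factorial * (n.choose k * (n ^ k * 2 ^ k)) := by
          rw [← hDc]; gcongr
      _ = (k.factorial * n.choose k) * (n ^ k * 2 ^ k) := by ring
      _ ≤ n ^ k * (n ^ k * 2 ^ k) := by gcongr
      _ = (2 * n ^ 2) ^ k := by rw [mul_pow, ← pow_mul]; ring
  omega

lemma hasTwins_mono {M : Finset (Finset ℕ)} {k l : ℕ} (h : HasTwins M l) (hkl : k ≤ l) :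
    HasTwins M k := by
  obtain ⟨M₁, M₂, hM₁, hM₂, hdis, ⟨f, hbij, hmono, himg⟩, hc1, hc2⟩ := h
  obtain ⟨N, hN, hNc⟩ := Finset.exists_subset_card_eq (hc1.symm ▸ hkl)
  have hN2 : N.image (fun e => e.image f) ⊆ M₂ := by
    rw [himg]; exact Finset.image_subset_image hN
  have hs : ∀ {A B : Finset (Finset ℕ)}, A ⊆ B → mSupport A ⊆ mSupport B := by
    intro A B hAB x hx
    rw [mem_mSupport] at hx ⊢
    obtain ⟨e, he, hx⟩ := hx
    exact ⟨e, hAB he, hx⟩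
  refine ⟨N, N.image (fun e => e.image f), hN.trans hM₁, hN2.trans hM₂,
    hdis.mono (hs hN) (hs hN2), ⟨f, ⟨?_, ?_, ?_⟩, ?_, rfl⟩, hNc, ?_⟩
  · intro x hx
    obtain ⟨e, he, hx⟩ := (mem_mSupport _ _).1 hx
    exact (mem_mSupport _ _).2 ⟨e.image f, Finset.mem_image_of_mem _ he,
      Finset.mem_image_of_mem _ hx⟩
  · exact hbij.injOn.mono (hs hN)
  · intro y hy
    obtain ⟨e', he', hy⟩ := (mem_mSupport _ _).1 hy
    obtain ⟨e, he, rfl⟩ := Finset.mem_image.1 he'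
    obtain ⟨x, hx, rfl⟩ := Finset.mem_image.1 hy
    exact ⟨x, (mem_mSupport _ _).2 ⟨e, he, hx⟩, rfl⟩
  · intro x hx y hy
    exact hmono x (hs hN hx) y (hs hN hy)
  · rw [Finset.card_image_of_injOn, hNc]
    have : Set.InjOn (fun e : Finset ℕ => e.image f) M₁ := by
      apply Finset.card_image_iff.1
      rw [← himg, hc1, hc2]
    exact this.mono hN

lemma factorial_ge (k : ℕ) : ((k : ℝ) / Real.exp 1) ^ k ≤ k.factorial := by
  have := Real.pow_div_factorial_le_exp (k : ℝ) (by positivity) k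
  rw [div_le_iff₀ (by positivity)] at this
  rw [div_pow, div_le_iff₀ (by positivity), ← Real.exp_nat_mul, mul_one, mul_comm]
  exact this

lemma upper_num {n k : ℕ} (hn : 2 ≤ n)
    (hk : (Real.exp 1 / (2 : ℝ) ^ ((1 : ℝ) / 3)) * (n : ℝ) ^ ((2 : ℝ) / 3) < k) :
    (2 * n ^ 2) ^ k < k.factorial * (2 * k).factorial := by
  have hpos : 0 < (Real.exp 1 / (2 : ℝ) ^ ((1 : ℝ) / 3)) * (n : ℝ) ^ ((2 : ℝ) / 3) := by
    have : (0 : ℝ) < n := by positivity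
    positivity
  have hk0 : k ≠ 0 := by
    rintro rfl
    push_cast at hk; linarith
  have h3 : Real.exp 1 ^ 3 / 2 * (n : ℝ) ^ 2 < (k : ℝ) ^ 3 := by
    have := pow_lt_pow_left₀ hk hpos.le (n := 3) (by norm_num)
    rw [mul_pow, div_pow, ← Real.rpow_natCast ((2 : ℝ) ^ ((1 : ℝ) / 3)), ← Real.rpow_mul (by norm_num),
      ← Real.rpow_natCast ((n : ℝ) ^ ((2 : ℝ) / 3)), ← Real.rpow_mul (by positivity)] at this
    norm_num at this
    have hE : Real.exp 1 ^ 3 = Real.exp 3 := by rw [← Real.exp_nat_mul]; norm_num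
    rw [hE]
    exact_mod_cast this
  have h4 : (2 * (n : ℝ) ^ 2) < (k / Real.exp 1) * ((2 * k) / Real.exp 1) ^ 2 := by
    have he := Real.exp_pos 1
    have : (k / Real.exp 1) * ((2 * k) / Real.exp 1) ^ 2 = 4 * (k : ℝ) ^ 3 / Real.exp 1 ^ 3 := by
      field_simp; ring
    rw [this, lt_div_iff₀ (by positivity)]
    nlinarith
  have h5 : (2 * (n : ℝ) ^ 2) ^ k < (k.factorial : ℝ) * ((2 * k).factorial : ℝ) := by
    calc (2 * (n : ℝ) ^ 2) ^ k < ((k / Real.exp 1) * ((2 * k) / Real.exp 1) ^ 2) ^ k :=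
          pow_lt_pow_left₀ h4 (by positivity) hk0
      _ = (k / Real.exp 1) ^ k * (((2 * k : ℕ) : ℝ) / Real.exp 1) ^ (2 * k) := by
          rw [mul_pow, ← pow_mul]; push_cast; rfl
      _ ≤ _ := by
          gcongr
          · exact factorial_ge k
          · exact factorial_ge (2 * k)
  exact_mod_cast h5

lemma bddAbove_twins (M : Finset (Finset ℕ)) : BddAbove {k | HasTwins M k} := by
  refine ⟨M.card, ?_⟩
  rintro k ⟨M₁, M₂, h1, h2, -, -, h3, -⟩
  rw [← h3]; exact Finset.card_le_card h1

lemma upper_bound (n : ℕ) (hn : 2 ≤ n) :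
    (minTwins 2 n : ℝ) ≤ (Real.exp 1 / (2 : ℝ) ^ ((1 : ℝ) / 3)) * (n : ℝ) ^ ((2 : ℝ) / 3) := by
  set c := (Real.exp 1 / (2 : ℝ) ^ ((1 : ℝ) / 3)) * (n : ℝ) ^ ((2 : ℝ) / 3) with hc
  have hc0 : 0 ≤ c := by positivity
  have hk : c < ((⌊c⌋₊ + 1 : ℕ) : ℝ) := by push_cast; exact Nat.lt_floor_add_one c
  obtain ⟨σ, hσ⟩ := exists_no_twins (upper_num hn hk)
  have h1 : minTwins 2 n ≤ twinMax (codeMatching σ) :=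
    Nat.sInf_le ⟨_, codeMatching_isOrdered σ, rfl⟩
  have h2 : twinMax (codeMatching σ) ≤ ⌊c⌋₊ := by
    apply csSup_le'
    intro l hl
    by_contra hcon
    exact hσ (hasTwins_mono hl (by omega))
  calc (minTwins 2 n : ℝ) ≤ (⌊c⌋₊ : ℝ) := by exact_mod_cast h1.trans h2
    _ ≤ c := Nat.floor_le hc0

end Upper

section Lower

lemma exists_chain_rank {α : Type*} (S : Finset α) (r : α → α → Prop)
    (htr : ∀ a b c, r a b → r b c → r a c) (k : ℕ)
    (hno : ¬ ∃ f : ℕ → α, (∀ i ≤ k, f i ∈ S) ∧ ∀ i j, i < j → j ≤ k → r (f i) (f j)) :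
    ∃ l : α → ℕ, (∀ a ∈ S, l a < k) ∧ ∀ a ∈ S, ∀ b ∈ S, r a b → l a < l b := by
  classical
  let L : α → Set ℕ := fun a => {m | ∃ f : ℕ → α, f m = a ∧ (∀ i ≤ m, f i ∈ S) ∧
    ∀ i j, i < j → j ≤ m → r (f i) (f j)}
  have hL : ∀ a, ∀ m ∈ L a, m < k := by
    rintro a m ⟨f, -, h1, h2⟩
    by_contra hm
    exact hno ⟨f, fun i hi => h1 i (by omega), fun i j hij hj => h2 i j hij (by omega)⟩
  have hb : ∀ a, BddAbove (L a) := fun a => ⟨k, fun m hm => (hL a m hm).le⟩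
  have h0 : ∀ a ∈ S, (L a).Nonempty := by
    intro a ha
    exact ⟨0, fun _ => a, rfl, fun _ _ => ha, fun i j hij hj => by omega⟩
  refine ⟨fun a => sSup (L a), fun a ha => hL a _ (Nat.sSup_mem (h0 a ha) (hb a)), ?_⟩
  intro a ha b hbS hab
  obtain ⟨f, h1, h2, h3⟩ := Nat.sSup_mem (h0 a ha) (hb a)
  set m := sSup (L a) with hm
  have : m + 1 ∈ L b := by
    refine ⟨fun i => if i ≤ m then f i else b, by simp, ?_, ?_⟩
    · intro i _
      dsimp only
      split_ifs with h
      · exact h2 i h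
      · exact hbS
    · intro i j hij hj
      have hi : i ≤ m := by omega
      dsimp only
      rw [if_pos hi]
      split_ifs with h
      · exact h3 i j hij h
      · rcases hi.lt_or_eq with h' | h'
        · exact htr _ _ _ (h3 i m h' le_rfl) (h1.symm ▸ hab)
        · rw [h', h1]; exact hab
  exact Nat.lt_of_succ_le (le_csSup (hb b) this)

/-- Erdős–Szekeres type lemma. -/
lemma chain_ramsey {α ι : Type*} [Fintype ι] (S : Finset α) (r : ι → α → α → Prop)
    (htr : ∀ i a b c, r i a b → r i b c → r i a c)
    (htot : ∀ a ∈ S, ∀ b ∈ S, a ≠ b → ∃ i, r i a b ∨ r i b a) (k : ℕ)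
    (hk : k ^ Fintype.card ι < S.card) :
    ∃ (i : ι) (f : ℕ → α), (∀ a ≤ k, f a ∈ S) ∧ ∀ a b, a < b → b ≤ k → r i (f a) (f b) := by
  classical
  by_contra hcon
  have : ∀ i, ∃ l : α → ℕ, (∀ a ∈ S, l a < k) ∧ ∀ a ∈ S, ∀ b ∈ S, r i a b → l a < l b := by
    intro i
    apply exists_chain_rank S (r i) (htr i) k
    rintro ⟨f, hf⟩
    exact hcon ⟨i, f, hf⟩
  choose l hl1 hl2 using this
  have h1 : S.card ≤ (Fintype.piFinset (fun _ : ι => Finset.range k)).card := by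
    refine Finset.card_le_card_of_injOn (fun a i => l i a) ?_ ?_
    · intro a ha
      simp only [Finset.mem_coe, Fintype.mem_piFinset, Finset.mem_range]
      exact fun i => hl1 i a ha
    · intro a ha b hb hab
      by_contra hne
      obtain ⟨i, h | h⟩ := htot a ha b hb hne
      · have := hl2 i a ha b hb h
        have := congrFun hab i
        simp only at this
        omega
      · have := hl2 i b hb a ha h
        have := congrFun hab i
        simp only at this
        omega
  simp at h1
  omega

/-- Twins in a planar point set `S` with coordinates `x`, `y`, as a set of pairs. -/
def PT {α : Type*} (x y : α → ℕ) (S : Finset α) (W : Finset (α × α)) : Prop :=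
  (∀ w ∈ W, w.1 ∈ S ∧ w.2 ∈ S) ∧ ∀ w ∈ W, ∀ w' ∈ W,
    (x w.1 < x w'.1 ↔ x w.2 < x w'.2) ∧ (y w.1 < y w'.1 ↔ y w.2 < y w'.2) ∧ w.1 ≠ w'.2

lemma exists_initial {α : Type*} (C : Finset α) (y : α → ℕ) (hy : Set.InjOn y C) (m : ℕ)
    (hm : m ≤ C.card) :
    ∃ Q ⊆ C, Q.card = m ∧ ∀ a ∈ Q, ∀ z ∈ C, z ∉ Q → y a < y z := by
  classical
  induction m with
  | zero => exact ⟨∅, by simp, by simp, by simp⟩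
  | succ m ih =>
    obtain ⟨Q, hQ, hc, hQ2⟩ := ih (by omega)
    have hne : (C \ Q).Nonempty := by
      rw [← Finset.card_pos, Finset.card_sdiff_of_subset hQ]; omega
    obtain ⟨b, hb, hmin⟩ := Finset.exists_min_image (C \ Q) y hne
    rw [Finset.mem_sdiff] at hb
    refine ⟨insert b Q, Finset.insert_subset hb.1 hQ, by rw [Finset.card_insert_of_notMem hb.2, hc],
      ?_⟩
    intro a ha z hz hzn
    rw [Finset.mem_insert, not_or] at hzn
    rcases Finset.mem_insert.1 ha with rfl | ha
    · refine lt_of_le_of_ne (hmin z (Finset.mem_sdiff.2 ⟨hz, hzn.2⟩)) ?_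
      intro h
      exact hzn.1 (hy hb.1 hz h).symm
    · exact hQ2 a ha z hz hzn.2

/-- Many triples, consecutive in the `y`-order and within a row. -/
lemma exists_triples {α : Type*} [Inhabited α] (y row : α → ℕ) : ∀ (N : ℕ) (P : Finset α) (T : ℕ),
    P.card = N → Set.InjOn y P → (∀ a ∈ P, ∀ b ∈ P, y a ≤ y b → row a ≤ row b) →
    3 * T + 2 * (P.image row).card ≤ P.card →
    ∃ f : ℕ → Fin 3 → α, (∀ a < T, ∀ i, f a i ∈ P) ∧
      (∀ a b, a < b → b < T → ∀ i j, y (f a i) < y (f b j)) ∧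
      (∀ a < T, ∀ i j, i ≠ j → f a i ≠ f a j) ∧
      (∀ a < T, ∀ i j, row (f a i) = row (f a j)) := by
  classical
  intro N
  induction N using Nat.strong_induction_on with
  | _ N ih =>
  intro P T hN hy hrow hcard
  rcases T with _ | T
  · exact ⟨fun _ _ => default, by simp, by simp, by simp, by simp⟩
  have hPne : P.Nonempty := by rw [← Finset.card_pos]; omega
  obtain ⟨e0, he0, hmin⟩ := Finset.exists_min_image P row hPne
  set C := P.filter (fun a => row a = row e0) with hC
  have hCP : C ⊆ P := Finset.filter_subset _ _
  have heC : e0 ∈ C := Finset.mem_filter.2 ⟨he0, rfl⟩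
  by_cases hC3 : C.card ≤ 2
  · have hCpos : 0 < C.card := Finset.card_pos.2 ⟨e0, heC⟩
    have hsd := Finset.card_sdiff_of_subset hCP
    have hle := Finset.card_le_card hCP
    have him : (P \ C).image row ⊆ (P.image row).erase (row e0) := by
      intro r hr
      obtain ⟨a, ha, rfl⟩ := Finset.mem_image.1 hr
      rw [Finset.mem_sdiff] at ha
      refine Finset.mem_erase.2 ⟨fun h => ha.2 (Finset.mem_filter.2 ⟨ha.1, h⟩),
        Finset.mem_image_of_mem _ ha.1⟩
    have him2 := Finset.card_le_card him
    rw [Finset.card_erase_of_mem (Finset.mem_image_of_mem _ he0)] at him2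
    have hipos : 0 < (P.image row).card := Finset.card_pos.2 ⟨_, Finset.mem_image_of_mem _ he0⟩
    obtain ⟨f, h1, h2⟩ := ih (P \ C).card (by omega) (P \ C) (T + 1) rfl
      (hy.mono (by simp))
      (fun a ha b hb => hrow a (Finset.sdiff_subset ha) b (Finset.sdiff_subset hb)) (by omega)
    exact ⟨f, fun a ha i => Finset.sdiff_subset (h1 a ha i), h2⟩
  · obtain ⟨Q, hQC, hQ3, hQ⟩ := exists_initial C y (hy.mono hCP) 3 (by omega)
    have hQP := hQC.trans hCP
    have hsd := Finset.card_sdiff_of_subset hQP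
    have hle := Finset.card_le_card hQP
    have him : (P \ Q).image row ⊆ P.image row := Finset.image_subset_image Finset.sdiff_subset
    have him2 := Finset.card_le_card him
    obtain ⟨f, h1, h2, h3, h4⟩ := ih (P \ Q).card (by omega) (P \ Q) T rfl
      (hy.mono (by simp))
      (fun a ha b hb => hrow a (Finset.sdiff_subset ha) b (Finset.sdiff_subset hb)) (by omega)
    let g : Fin 3 → α := fun i => (Q.equivFinOfCardEq hQ3).symm i
    have hgQ : ∀ i, g i ∈ Q := fun i => ((Q.equivFinOfCardEq hQ3).symm i).2
    have hginj : ∀ i j, i ≠ j → g i ≠ g j := by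
      intro i j hij h
      exact hij ((Q.equivFinOfCardEq hQ3).symm.injective (Subtype.ext h))
    have hglt : ∀ i, ∀ z ∈ P \ Q, y (g i) < y z := by
      intro i z hz
      rw [Finset.mem_sdiff] at hz
      by_cases hzC : z ∈ C
      · exact hQ _ (hgQ i) z hzC hz.2
      · by_contra hcon
        have hr := hrow z hz.1 _ (hQP (hgQ i)) (not_lt.1 hcon)
        rw [(Finset.mem_filter.1 (hQC (hgQ i))).2] at hr
        exact hzC (Finset.mem_filter.2 ⟨hz.1, le_antisymm hr (hmin z hz.1)⟩)
    have hgrow : ∀ i, row (g i) = row e0 := fun i => (Finset.mem_filter.1 (hQC (hgQ i))).2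
    refine ⟨fun a => Nat.casesOn a g f, ?_, ?_, ?_, ?_⟩
    · rintro (_ | a) ha i
      · exact hQP (hgQ i)
      · exact Finset.sdiff_subset (h1 a (by omega) i)
    · rintro (_ | a) (_ | b) hab hb i j
      · omega
      · exact hglt i _ (h1 b (by omega) j)
      · omega
      · exact h2 a b (by omega) (by omega) i j
    · rintro (_ | a) ha i j hij
      · exact hginj i j hij
      · exact h3 a (by omega) i j hij
    · rintro (_ | a) ha i j
      · exact (hgrow i).trans (hgrow j).symm
      · exact h4 a (by omega) i j

/-- Twins inside one block, each pair staying in one row. -/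
lemma block_step {α : Type*} [Inhabited α] (x y row : α → ℕ) (P : Finset α) (T k : ℕ)
    (hx : Set.InjOn x P) (hy : Set.InjOn y P)
    (hrow : ∀ a ∈ P, ∀ b ∈ P, y a ≤ y b → row a ≤ row b)
    (hcard : 3 * T + 2 * (P.image row).card ≤ P.card) (hk : k ^ 3 < T) :
    ∃ W, PT x y P W ∧ W.card = k + 1 ∧ ∀ w ∈ W, row w.1 = row w.2 := by
  classical
  obtain ⟨f, h1, h2, h3, h4⟩ := exists_triples y row _ P T rfl hy hrow hcard
  have hyne : ∀ a < T, ∀ b < T, a ≠ b → ∀ i j, f a i ≠ f b j := by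
    intro a ha b hb hab i j h
    rcases lt_or_gt_of_ne hab with h' | h'
    · have := h2 a b h' hb i j
      rw [h] at this; omega
    · have := h2 b a h' ha j i
      rw [h] at this; omega
  have hxx : ∀ a < T, ∀ b < T, a ≠ b → ∀ i, x (f a i) ≠ x (f b i) := by
    intro a ha b hb hab i h
    exact hyne a ha b hb hab i i (hx (h1 a ha i) (h1 b hb i) h)
  obtain ⟨i, g, hg1, hg2⟩ := chain_ramsey (Finset.range T)
    (fun (i : Fin 3) a b => x (f a i) < x (f b i) ∧ x (f a (i + 1)) < x (f b (i + 1)))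
    (fun i a b c hab hbc => ⟨hab.1.trans hbc.1, hab.2.trans hbc.2⟩)
    (by
      intro a ha b hb hab
      rw [Finset.mem_range] at ha hb
      have e0 := hxx a ha b hb hab 0
      have e1 := hxx a ha b hb hab 1
      have e2 := hxx a ha b hb hab 2
      have a1 : (0 : Fin 3) + 1 = 1 := rfl
      have a2 : (1 : Fin 3) + 1 = 2 := rfl
      have a3 : (2 : Fin 3) + 1 = 0 := rfl
      rcases lt_or_gt_of_ne e0 with c0 | c0 <;> rcases lt_or_gt_of_ne e1 with c1 | c1 <;>
        rcases lt_or_gt_of_ne e2 with c2 | c2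
      · exact ⟨0, Or.inl ⟨c0, c1⟩⟩
      · exact ⟨0, Or.inl ⟨c0, c1⟩⟩
      · exact ⟨2, Or.inl ⟨c2, c0⟩⟩
      · exact ⟨1, Or.inr ⟨c1, c2⟩⟩
      · exact ⟨1, Or.inl ⟨c1, c2⟩⟩
      · exact ⟨2, Or.inr ⟨c2, c0⟩⟩
      · exact ⟨0, Or.inr ⟨c0, c1⟩⟩
      · exact ⟨0, Or.inr ⟨c0, c1⟩⟩) k (by simpa using hk)
  have hgT : ∀ a ≤ k, g a < T := fun a ha => Finset.mem_range.1 (hg1 a ha)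
  have hgne : ∀ a ≤ k, ∀ b ≤ k, a ≠ b → g a ≠ g b := by
    intro a ha b hb hab h
    rcases lt_or_gt_of_ne hab with h' | h'
    · have := (hg2 a b h' hb).1
      rw [h] at this; omega
    · have := (hg2 b a h' ha).1
      rw [h] at this; omega
  have hii : i ≠ i + 1 := by fin_cases i <;> decide
  refine ⟨(Finset.range (k + 1)).image (fun a => (f (g a) i, f (g a) (i + 1))), ⟨?_, ?_⟩, ?_, ?_⟩
  · intro w hw
    obtain ⟨a, ha, rfl⟩ := Finset.mem_image.1 hw
    rw [Finset.mem_range] at ha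
    exact ⟨h1 _ (hgT a (by omega)) _, h1 _ (hgT a (by omega)) _⟩
  · intro w hw w' hw'
    obtain ⟨a, ha, rfl⟩ := Finset.mem_image.1 hw
    obtain ⟨b, hb, rfl⟩ := Finset.mem_image.1 hw'
    rw [Finset.mem_range] at ha hb
    dsimp only
    rcases lt_trichotomy a b with hab | rfl | hab
    · have e := hg2 a b hab (by omega)
      have hne := hgne a (by omega) b (by omega) hab.ne
      refine ⟨iff_of_true e.1 e.2, ?_, hyne _ (hgT a (by omega)) _ (hgT b (by omega)) hne _ _⟩
      rcases lt_or_gt_of_ne hne with h | h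
      · exact iff_of_true (h2 _ _ h (hgT b (by omega)) _ _) (h2 _ _ h (hgT b (by omega)) _ _)
      · exact iff_of_false (h2 _ _ h (hgT a (by omega)) _ _).not_gt
          (h2 _ _ h (hgT a (by omega)) _ _).not_gt
    · simp only [lt_irrefl, true_and]
      exact h3 _ (hgT a (by omega)) _ _ hii
    · have e := hg2 b a hab (by omega)
      have hne := hgne a (by omega) b (by omega) hab.ne'
      refine ⟨iff_of_false e.1.not_gt e.2.not_gt, ?_,
        hyne _ (hgT a (by omega)) _ (hgT b (by omega)) hne _ _⟩
      rcases lt_or_gt_of_ne hne with h | h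
      · exact iff_of_true (h2 _ _ h (hgT b (by omega)) _ _) (h2 _ _ h (hgT b (by omega)) _ _)
      · exact iff_of_false (h2 _ _ h (hgT a (by omega)) _ _).not_gt
          (h2 _ _ h (hgT a (by omega)) _ _).not_gt
  · rw [Finset.card_image_of_injOn, Finset.card_range]
    intro a ha b hb hab
    simp only [Finset.coe_range, Set.mem_Iio] at ha hb
    by_contra hne
    exact hyne _ (hgT a (by omega)) _ (hgT b (by omega)) (hgne a (by omega) b (by omega) hne) _ _
      (congrArg Prod.fst hab)
  · intro w hw
    obtain ⟨a, ha, rfl⟩ := Finset.mem_image.1 hw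
    rw [Finset.mem_range] at ha
    exact h4 _ (hgT a (by omega)) _ _

/-- Division of a point set into consecutive buckets. -/
lemma exists_buckets {α : Type*} (S : Finset α) (x : α → ℕ) (hx : Set.InjOn x S) (p B : ℕ)
    (h : S.card ≤ p * B) :
    ∃ blk : α → ℕ, (∀ a ∈ S, blk a < p) ∧ (∀ a ∈ S, ∀ b ∈ S, x a ≤ x b → blk a ≤ blk b) ∧
      ∀ c, (S.filter (fun a => blk a = c)).card ≤ B := by
  classical
  let rk : α → ℕ := fun a => (S.filter (fun z => x z < x a)).card
  have hrk : ∀ a ∈ S, rk a < S.card := by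
    intro a ha
    apply Finset.card_lt_card
    refine ⟨Finset.filter_subset _ _, fun hsub => ?_⟩
    have := (Finset.mem_filter.1 (hsub ha)).2
    omega
  have hmono : ∀ a b, x a ≤ x b → rk a ≤ rk b := by
    intro a b hab
    apply Finset.card_le_card
    intro z hz
    rw [Finset.mem_filter] at hz ⊢
    exact ⟨hz.1, by omega⟩
  have hstrict : ∀ a ∈ S, ∀ b, x a < x b → rk a < rk b := by
    intro a ha b hab
    apply Finset.card_lt_card
    refine ⟨?_, fun hsub => ?_⟩
    · intro z hz
      rw [Finset.mem_filter] at hz ⊢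
      exact ⟨hz.1, by omega⟩
    · have := (Finset.mem_filter.1 (hsub (Finset.mem_filter.2 ⟨ha, hab⟩))).2
      omega
  refine ⟨fun a => rk a / B, ?_, fun a _ b _ hab => Nat.div_le_div_right (hmono a b hab), ?_⟩
  · intro a ha
    exact Nat.div_lt_of_lt_mul (by rw [mul_comm]; exact (hrk a ha).trans_le h)
  · intro c
    rcases Nat.eq_zero_or_pos B with rfl | hB
    · have : S = ∅ := by rw [← Finset.card_eq_zero]; omega
      simp [this]
    · have : (Finset.Ico (c * B) (c * B + B)).card = B := by simp
      refine le_of_le_of_eq (Finset.card_le_card_of_injOn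
        (t := Finset.Ico (c * B) (c * B + B)) rk ?_ ?_) this
      · intro a ha
        have hac : rk a / B = c := (Finset.mem_filter.1 ha).2
        have e1 := Nat.div_add_mod (rk a) B
        have e2 := Nat.mod_lt (rk a) hB
        rw [hac, mul_comm] at e1
        simp only [Finset.coe_Ico, Set.mem_Ico]
        omega
      · intro a ha b hb hab
        have ha' := (Finset.mem_filter.1 ha).1
        have hb' := (Finset.mem_filter.1 hb).1
        rcases lt_trichotomy (x a) (x b) with h' | h' | h'
        · have := hstrict a ha' b h'; omega
        · exact hx ha' hb' h'
        · have := hstrict b hb' a h'; omega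

/-- Greedy construction over blocks. -/
lemma greedy_blocks {α : Type*} [Inhabited α] (S : Finset α) (x y blk row : α → ℕ) (p B m L T k : ℕ)
    (hx : Set.InjOn x S) (hy : Set.InjOn y S)
    (hblk1 : ∀ a ∈ S, blk a < p) (hblk2 : ∀ a ∈ S, ∀ b ∈ S, x a ≤ x b → blk a ≤ blk b)
    (hblk3 : ∀ c, (S.filter (fun a => blk a = c)).card ≤ B)
    (hrow1 : ∀ a ∈ S, row a < m) (hrow2 : ∀ a ∈ S, ∀ b ∈ S, y a ≤ y b → row a ≤ row b)
    (hrow3 : ∀ c, (S.filter (fun a => row a = c)).card ≤ L)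
    (hTm : T ≤ m) (hk : k ^ 3 < T)
    (hineq : ∀ b, b * (k + 1) < T →
      T * L + b * B + (p - b) * (3 * T + 2 * (m - T)) < S.card) :
    ∀ b, (∀ b', b' < b → b' * (k + 1) < T) →
      ∃ (W : Finset (α × α)) (U V : Finset ℕ), U ⊆ Finset.range p ∧ U.card = b ∧
        V ⊆ Finset.range m ∧ V.card ≤ b * (k + 1) ∧ PT x y S W ∧ W.card = b * (k + 1) ∧
        ∀ w ∈ W, blk w.1 = blk w.2 ∧ row w.1 = row w.2 ∧ blk w.1 ∈ U ∧ row w.1 ∈ V := by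
  classical
  intro b
  induction b with
  | zero =>
    intro _
    exact ⟨∅, ∅, ∅, by simp, by simp, by simp, by simp, ⟨by simp, by simp⟩, by simp, by simp⟩
  | succ b ih =>
    intro hb
    obtain ⟨W, U, V, hU, hUc, hV, hVc, hW, hWc, hWm⟩ := ih (fun b' h => hb b' (by omega))
    have hbT := hb b (by omega)
    obtain ⟨V', hVV', hV'm, hV'c⟩ := Finset.exists_subsuperset_card_eq hV
      (show V.card ≤ T by omega) (by simpa using hTm)
    set K := 3 * T + 2 * (m - T) with hK
    let P : ℕ → Finset α := fun c => S.filter (fun a => blk a = c ∧ row a ∉ V')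
    have hex : ∃ c ∈ Finset.range p \ U, K ≤ (P c).card := by
      by_contra! hcon
      have hcov : S ⊆ (V'.biUnion (fun c => S.filter (fun a => row a = c))) ∪
          (U.biUnion (fun c => S.filter (fun a => blk a = c))) ∪
          ((Finset.range p \ U).biUnion P) := by
        intro a ha
        simp only [Finset.mem_union, Finset.mem_biUnion, Finset.mem_filter, Finset.mem_sdiff,
          Finset.mem_range, P]
        by_cases h1 : row a ∈ V'
        · exact Or.inl (Or.inl ⟨_, h1, ha, rfl⟩)
        · by_cases h2 : blk a ∈ U
          · exact Or.inl (Or.inr ⟨_, h2, ha, rfl⟩)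
          · exact Or.inr ⟨_, ⟨hblk1 a ha, h2⟩, ha, rfl, h1⟩
      have c0 := Finset.card_le_card hcov
      have c1 := Finset.card_union_le ((V'.biUnion (fun c => S.filter (fun a => row a = c))) ∪
          (U.biUnion (fun c => S.filter (fun a => blk a = c)))) ((Finset.range p \ U).biUnion P)
      have c2 := Finset.card_union_le (V'.biUnion (fun c => S.filter (fun a => row a = c)))
          (U.biUnion (fun c => S.filter (fun a => blk a = c)))
      have c3 : (V'.biUnion (fun c => S.filter (fun a => row a = c))).card ≤ T * L := by
        rw [← hV'c]; exact Finset.card_biUnion_le_card_mul _ _ _ (fun c _ => hrow3 c)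
      have c4 : (U.biUnion (fun c => S.filter (fun a => blk a = c))).card ≤ b * B := by
        rw [← hUc]; exact Finset.card_biUnion_le_card_mul _ _ _ (fun c _ => hblk3 c)
      have c5 : ((Finset.range p \ U).biUnion P).card ≤ (p - b) * K := by
        have : (Finset.range p \ U).card = p - b := by
          rw [Finset.card_sdiff_of_subset hU, hUc, Finset.card_range]
        rw [← this]
        exact Finset.card_biUnion_le_card_mul _ _ _ (fun c hc => (hcon c hc).le)
      have := hineq b hbT
      omega
    obtain ⟨c, hc, hcK⟩ := hex
    rw [Finset.mem_sdiff, Finset.mem_range] at hc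
    have hPS : P c ⊆ S := Finset.filter_subset _ _
    have hPm : ∀ a ∈ P c, blk a = c ∧ row a ∉ V' := fun a ha => (Finset.mem_filter.1 ha).2
    have him : ((P c).image row).card ≤ m - T := by
      have : (P c).image row ⊆ Finset.range m \ V' := by
        intro r hr
        obtain ⟨a, ha, rfl⟩ := Finset.mem_image.1 hr
        rw [Finset.mem_sdiff, Finset.mem_range]
        exact ⟨hrow1 a (hPS ha), (hPm a ha).2⟩
      have := Finset.card_le_card this
      rwa [Finset.card_sdiff_of_subset hV'm, hV'c, Finset.card_range] at this
    obtain ⟨W', hW', hW'c, hW'r⟩ := block_step x y row (P c) T k (hx.mono hPS) (hy.mono hPS)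
      (fun a ha b hb => hrow2 a (hPS ha) b (hPS hb)) (by omega) hk
    have hW'm : ∀ w ∈ W', blk w.1 = c ∧ blk w.2 = c ∧ row w.1 ∉ V ∧ row w.1 = row w.2 := by
      intro w hw
      have h1 := hPm _ (hW'.1 w hw).1
      have h2 := hPm _ (hW'.1 w hw).2
      exact ⟨h1.1, h2.1, fun h => h1.2 (hVV' h), hW'r w hw⟩
    have bl : ∀ a ∈ S, ∀ b ∈ S, blk a < blk b → x a < x b := by
      intro a ha b hb hab
      by_contra h
      have := hblk2 b hb a ha (by omega)
      omega
    have rl : ∀ a ∈ S, ∀ b ∈ S, row a < row b → y a < y b := by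
      intro a ha b hb hab
      by_contra h
      have := hrow2 b hb a ha (by omega)
      omega
    have cross : ∀ w : α × α, ∀ w' : α × α, w.1 ∈ S → w.2 ∈ S → w'.1 ∈ S → w'.2 ∈ S →
        blk w.1 = blk w.2 → row w.1 = row w.2 → blk w'.1 = blk w'.2 → row w'.1 = row w'.2 →
        blk w.1 ≠ blk w'.1 → row w.1 ≠ row w'.1 →
        (x w.1 < x w'.1 ↔ x w.2 < x w'.2) ∧ (y w.1 < y w'.1 ↔ y w.2 < y w'.2) ∧ w.1 ≠ w'.2 := by
      intro w w' m1 m2 m3 m4 b1 r1 b2 r2 hbne hrne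
      refine ⟨?_, ?_, ?_⟩
      · rcases lt_or_gt_of_ne hbne with h | h
        · exact iff_of_true (bl _ m1 _ m3 h) (bl _ m2 _ m4 (by omega))
        · exact iff_of_false (bl _ m3 _ m1 h).not_gt (bl _ m4 _ m2 (by omega)).not_gt
      · rcases lt_or_gt_of_ne hrne with h | h
        · exact iff_of_true (rl _ m1 _ m3 h) (rl _ m2 _ m4 (by omega))
        · exact iff_of_false (rl _ m3 _ m1 h).not_gt (rl _ m4 _ m2 (by omega)).not_gt
      · intro h
        rw [h] at hbne
        exact hbne b2.symm
    have hWne : ∀ w ∈ W, ∀ w' ∈ W', blk w.1 ≠ blk w'.1 ∧ row w.1 ≠ row w'.1 := by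
      intro w hw w' hw'
      have e1 := hWm w hw
      have e2 := hW'm w' hw'
      constructor
      · intro h
        rw [e2.1] at h
        exact hc.2 (h ▸ e1.2.2.1)
      · intro h
        exact e2.2.2.1 (h ▸ e1.2.2.2)
    refine ⟨W ∪ W', insert c U, V ∪ W'.image (fun w => row w.1), ?_, ?_, ?_, ?_, ⟨?_, ?_⟩, ?_, ?_⟩
    · exact Finset.insert_subset (Finset.mem_range.2 hc.1) hU
    · rw [Finset.card_insert_of_notMem hc.2, hUc]
    · refine Finset.union_subset hV ?_
      intro r hr
      obtain ⟨w, hw, rfl⟩ := Finset.mem_image.1 hr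
      exact Finset.mem_range.2 (hrow1 _ (hPS (hW'.1 w hw).1))
    · have e1 := Finset.card_union_le V (W'.image (fun w => row w.1))
      have e2 : (W'.image (fun w => row w.1)).card ≤ W'.card := Finset.card_image_le
      rw [add_mul]; omega
    · intro w hw
      rcases Finset.mem_union.1 hw with hw | hw
      · exact hW.1 w hw
      · exact ⟨hPS (hW'.1 w hw).1, hPS (hW'.1 w hw).2⟩
    · intro w hw w' hw'
      rcases Finset.mem_union.1 hw with hw | hw <;> rcases Finset.mem_union.1 hw' with hw' | hw'
      · exact hW.2 w hw w' hw'
      · have e1 := hWm w hw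
        have e2 := hW'm w' hw'
        have e3 := hWne w hw w' hw'
        exact cross w w' (hW.1 w hw).1 (hW.1 w hw).2 (hPS (hW'.1 w' hw').1) (hPS (hW'.1 w' hw').2)
          e1.1 e1.2.1 (e2.1.trans e2.2.1.symm) e2.2.2.2 e3.1 e3.2
      · have e1 := hWm w' hw'
        have e2 := hW'm w hw
        have e3 := hWne w' hw' w hw
        exact cross w w' (hPS (hW'.1 w hw).1) (hPS (hW'.1 w hw).2) (hW.1 w' hw').1 (hW.1 w' hw').2
          (e2.1.trans e2.2.1.symm) e2.2.2.2 e1.1 e1.2.1 e3.1.symm e3.2.symm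
      · exact hW'.2 w hw w' hw'
    · rw [Finset.card_union_of_disjoint, hWc, hW'c]
      · ring
      · rw [Finset.disjoint_left]
        intro w hw hw'
        exact (hWne w hw w hw').1 rfl
    · intro w hw
      rcases Finset.mem_union.1 hw with hw | hw
      · have e := hWm w hw
        exact ⟨e.1, e.2.1, Finset.mem_insert_of_mem e.2.2.1, Finset.mem_union_left _ e.2.2.2⟩
      · have e := hW'm w hw
        refine ⟨e.1.trans e.2.1.symm, e.2.2.2, ?_, ?_⟩
        · rw [e.1]; exact Finset.mem_insert_self _ _
        · exact Finset.mem_union_right _ (Finset.mem_image_of_mem (fun w : α × α => row w.1) hw)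

lemma perm_small {α : Type*} (S : Finset α) (x y : α → ℕ) (hx : Set.InjOn x S)
    (hy : Set.InjOn y S) (h2 : 2 ≤ S.card) (hS : S.card ≤ 1000000) :
    ∃ W, PT x y S W ∧ (S.card + 1) ^ 3 ≤ 100000 * W.card ^ 5 := by
  classical
  obtain ⟨k, hk1, hk2⟩ : ∃ k, k ^ 2 < S.card ∧ S.card ≤ (k + 1) ^ 2 := by
    refine ⟨Nat.sqrt (S.card - 1), ?_, ?_⟩
    · have := Nat.sqrt_le' (S.card - 1); omega
    · have := Nat.lt_succ_sqrt' (S.card - 1)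
      rw [Nat.succ_eq_add_one] at this; omega
  have hk0 : 1 ≤ k := by
    rcases Nat.eq_zero_or_pos k with rfl | h
    · norm_num at hk2; omega
    · exact h
  have hk3 : k < 1000 := by nlinarith
  obtain ⟨i, f, hf1, hf2⟩ := chain_ramsey (ι := Bool) S
    (fun i a b => x a < x b ∧ (if i then y a < y b else y b < y a))
    (by
      intro i a b c hab hbc
      cases i
      · simp at *; omega
      · simp at *; omega)
    (by
      intro a ha b hb hab
      have e1 : x a ≠ x b := fun h => hab (hx ha hb h)
      have e2 : y a ≠ y b := fun h => hab (hy ha hb h)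
      rcases lt_or_gt_of_ne e1 with h1 | h1 <;> rcases lt_or_gt_of_ne e2 with h2 | h2
      · exact ⟨true, Or.inl ⟨h1, by simpa using h2⟩⟩
      · exact ⟨false, Or.inl ⟨h1, by simpa using h2⟩⟩
      · exact ⟨false, Or.inr ⟨h1, by simpa using h2⟩⟩
      · exact ⟨true, Or.inr ⟨h1, by simpa using h2⟩⟩) k (by simpa using hk1)
  have hxl : ∀ a b, a ≤ k → b ≤ k → (x (f a) < x (f b) ↔ a < b) := by
    intro a b ha hb
    rcases lt_trichotomy a b with h | h | h
    · exact iff_of_true (hf2 a b h hb).1 h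
    · subst h; simp
    · exact iff_of_false (hf2 b a h ha).1.not_gt h.not_gt
  have hyl : ∀ a b, a ≤ k → b ≤ k → (y (f a) < y (f b) ↔ (if i then a < b else b < a)) := by
    intro a b ha hb
    rcases lt_trichotomy a b with h | h | h
    · have := (hf2 a b h hb).2
      cases i <;> simp at * <;> omega
    · subst h; simp
    · have := (hf2 b a h ha).2
      cases i <;> simp at * <;> omega
  have hne : ∀ a b, a ≤ k → b ≤ k → a ≠ b → f a ≠ f b := by
    intro a b ha hb hab h
    have e1 := hxl a b ha hb
    have e2 := hxl b a hb ha
    rw [h] at e1 e2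
    omega
  obtain ⟨t, ht1, ht2⟩ : ∃ t, 2 * t ≤ k + 1 ∧ k ≤ 2 * t := ⟨(k + 1) / 2, by omega, by omega⟩
  have hWc : ((Finset.range t).image (fun a => (f a, f (a + t)))).card = t := by
    rw [Finset.card_image_of_injOn, Finset.card_range]
    intro a ha b hb hab
    simp only [Finset.coe_range, Set.mem_Iio] at ha hb
    by_contra h
    exact hne a b (by omega) (by omega) h (congrArg Prod.fst hab)
  refine ⟨(Finset.range t).image (fun a => (f a, f (a + t))), ⟨?_, ?_⟩, ?_⟩
  · intro w hw
    obtain ⟨a, ha, rfl⟩ := Finset.mem_image.1 hw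
    rw [Finset.mem_range] at ha
    exact ⟨hf1 _ (by omega), hf1 _ (by omega)⟩
  · intro w hw w' hw'
    obtain ⟨a, ha, rfl⟩ := Finset.mem_image.1 hw
    obtain ⟨b, hb, rfl⟩ := Finset.mem_image.1 hw'
    rw [Finset.mem_range] at ha hb
    dsimp only
    rw [hxl _ _ (by omega) (by omega), hxl _ _ (by omega) (by omega),
      hyl _ _ (by omega) (by omega), hyl _ _ (by omega) (by omega)]
    refine ⟨by omega, by cases i <;> simp, hne _ _ (by omega) (by omega) (by omega)⟩
  · rw [hWc]
    have e1 : S.card + 1 ≤ k ^ 2 + 2 * k + 2 := by nlinarith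
    have e2 : (S.card + 1) ^ 3 ≤ (k ^ 2 + 2 * k + 2) ^ 3 := Nat.pow_le_pow_left e1 3
    have e3 : k ^ 5 ≤ (2 * t) ^ 5 := Nat.pow_le_pow_left ht2 5
    have e4 : (k ^ 2 + 2 * k + 2) ^ 3 ≤ 3125 * k ^ 5 := by
      have f1 : k ^ 2 + 2 * k + 2 ≤ 5 * k ^ 2 := by nlinarith
      rcases le_or_gt k 25 with hk | hk
      · calc (k ^ 2 + 2 * k + 2) ^ 3 ≤ (5 * k ^ 2) ^ 3 := Nat.pow_le_pow_left f1 3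
          _ = 125 * k * k ^ 5 := by ring
          _ ≤ 3125 * k ^ 5 := Nat.mul_le_mul_right _ (by omega)
      · have f2 : 5 * (k ^ 2 + 2 * k + 2) ≤ 6 * k ^ 2 := by nlinarith
        have f3 := Nat.pow_le_pow_left f2 3
        have f4 : (6 * k ^ 2) ^ 3 ≤ 125 * (3125 * k ^ 5) := by
          calc (6 * k ^ 2) ^ 3 = 216 * k * k ^ 5 := by ring
            _ ≤ (125 * 3125) * k ^ 5 := Nat.mul_le_mul_right _ (by omega)
            _ = _ := by ring
        have f5 : (5 * (k ^ 2 + 2 * k + 2)) ^ 3 = 125 * (k ^ 2 + 2 * k + 2) ^ 3 := by ring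
        omega
    have e5 : (2 * t) ^ 5 = 32 * t ^ 5 := by ring
    omega

lemma perm_arith (N T q k p : ℕ) (hq : q = k + 1) (hN : 1000000 < N)
    (hT1 : (N + 1) ^ 3 ≤ 100000 * T ^ 5) (hT2 : 100000 * (T - 1) ^ 5 < (N + 1) ^ 3)
    (hk1 : k ^ 3 < T) (hk2 : T ≤ q ^ 3) (hp1 : 2 * T ≤ p * q) (hp2 : p * q < 2 * T + q) (b : ℕ)
    (hb : b * q < T) :
    T * (N / (4 * T) + 1) + b * (N / p + 1) + (p - b) * (3 * T + 2 * (4 * T - T)) < N := by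
  have hT300 : 300 < T := by
    by_contra h
    have h1 : T ^ 5 ≤ 300 ^ 5 := Nat.pow_le_pow_left (by omega) 5
    have h2 : 1000000 ^ 3 ≤ (N + 1) ^ 3 := Nat.pow_le_pow_left (by omega) 3
    norm_num at h1 h2
    omega
  have hqT : 40 * q ≤ T := by
    by_contra h
    have h7 : 7 ≤ k := by omega
    have : 49 * k ≤ k ^ 3 := by nlinarith [Nat.pow_le_pow_left h7 2]
    omega
  have hNq : 44 * T ^ 2 ≤ N * q := by
    have h1 : 45 * T ^ 2 ≤ (N + 1) * q := by
      by_contra h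
      have h0 : (N + 1) * q ≤ 45 * T ^ 2 := by omega
      have h2 := Nat.pow_le_pow_left h0 3
      have h3 : (N + 1) ^ 3 * T ≤ ((N + 1) * q) ^ 3 := by
        rw [mul_pow]; exact Nat.mul_le_mul_left _ hk2
      have h4 : 100000 * (T - 1) ^ 5 * T < (45 * T ^ 2) ^ 3 :=
        calc 100000 * (T - 1) ^ 5 * T < (N + 1) ^ 3 * T := Nat.mul_lt_mul_of_pos_right hT2 (by omega)
          _ ≤ _ := h3.trans h2
      have h5 : 99 * T ≤ 100 * (T - 1) := by omega
      have h6 := Nat.pow_le_pow_left h5 5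
      have h7 : 100000 * (99 * T) ^ 5 * T ≤ 100000 * (100 * (T - 1)) ^ 5 * T := by gcongr
      have h8 : 100000 * (100 * (T - 1)) ^ 5 * T = 100 ^ 5 * (100000 * (T - 1) ^ 5 * T) := by ring
      have h9 : 100000 * (99 * T) ^ 5 * T = 100000 * 99 ^ 5 * T ^ 6 := by ring
      have h10 : (45 * T ^ 2) ^ 3 = 45 ^ 3 * T ^ 6 := by ring
      have h11 : 0 < T ^ 6 := by positivity
      rw [h10] at h4
      rw [h9, h8] at h7
      norm_num at h4 h7
      omega
    nlinarith
  have hT0 : 0 < T := by omega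
  have hp0 : 0 < p := by
    rcases Nat.eq_zero_or_pos p with rfl | h
    · omega
    · exact h
  have hq0 : 0 < q := by omega
  have h2b : 2 * b < p := by
    by_contra h
    have : p * q ≤ 2 * b * q := Nat.mul_le_mul_right _ (by omega)
    nlinarith
  set B := N / p + 1 with hB
  set L := N / (4 * T) + 1 with hL
  have hB1 : p * B ≤ N + p := by
    have := Nat.mul_div_le N p
    rw [hB, mul_add]; omega
  have hB2 : N < p * B := Nat.lt_mul_div_succ N hp0
  have hL1 : 4 * (T * L) ≤ N + 4 * T := by
    have := Nat.mul_div_le N (4 * T)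
    rw [hL]; nlinarith
  have hpq : 40 * (p * q) ≤ 81 * T := by omega
  have hB9 : 9 * T ≤ B := by
    by_contra h
    have h1 : p * B ≤ p * (9 * T) := Nat.mul_le_mul_left _ (by omega)
    have h2 : N * q ≤ (p * (9 * T)) * q := Nat.mul_le_mul_right _ (by omega)
    have h3 : 9 * T * (40 * (p * q)) ≤ 9 * T * (81 * T) := Nat.mul_le_mul_left _ hpq
    nlinarith
  have hmain : 4 * T + 2 * p + 18 * (T * p) < N := by
    by_contra h
    have h1 : N * q ≤ (4 * T + 2 * p + 18 * (T * p)) * q := Nat.mul_le_mul_right _ (by omega)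
    have h2 : T * (40 * (p * q)) ≤ T * (81 * T) := Nat.mul_le_mul_left _ hpq
    have h3 : T * (40 * q) ≤ T * T := Nat.mul_le_mul_left _ hqT
    nlinarith
  obtain ⟨d, hd⟩ : ∃ d, p = b + d := ⟨p - b, by omega⟩
  have hdb : p - b = d := by omega
  have h9 : 3 * T + 2 * (4 * T - T) = 9 * T := by omega
  rw [hdb, h9]
  obtain ⟨E, hE⟩ : ∃ E, B = 9 * T + E := ⟨B - 9 * T, by omega⟩
  have hbd : b * E ≤ d * E := Nat.mul_le_mul_right _ (by omega)
  rw [hE] at hB1 ⊢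
  subst hd
  nlinarith

lemma perm_large {α : Type*} [Inhabited α] (S : Finset α) (x y : α → ℕ) (hx : Set.InjOn x S)
    (hy : Set.InjOn y S) (hS : 1000000 < S.card) :
    ∃ W, PT x y S W ∧ (S.card + 1) ^ 3 ≤ 100000 * W.card ^ 5 := by
  classical
  set N := S.card with hN
  have hTex : ∃ T, (N + 1) ^ 3 ≤ 100000 * T ^ 5 := by
    refine ⟨N + 1, ?_⟩
    calc (N + 1) ^ 3 ≤ (N + 1) ^ 5 := Nat.pow_le_pow_right (by omega) (by norm_num)
      _ ≤ _ := Nat.le_mul_of_pos_left _ (by norm_num)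
  obtain ⟨T, hT1, hT0, hT2⟩ : ∃ T, (N + 1) ^ 3 ≤ 100000 * T ^ 5 ∧ 0 < T ∧
      100000 * (T - 1) ^ 5 < (N + 1) ^ 3 := by
    have hs := Nat.find_spec hTex
    have hpos : 0 < Nat.find hTex := by
      rcases Nat.eq_zero_or_pos (Nat.find hTex) with h | h
      · rw [h] at hs; norm_num at hs
      · exact h
    exact ⟨Nat.find hTex, hs, hpos, not_le.1 (Nat.find_min hTex (by omega))⟩
  obtain ⟨k, hk1, hk2⟩ : ∃ k, k ^ 3 < T ∧ T ≤ (k + 1) ^ 3 := by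
    have hex : ∃ k, T ≤ (k + 1) ^ 3 := ⟨T, by nlinarith [Nat.le_self_pow (n := 3) (by norm_num) (T + 1)]⟩
    refine ⟨Nat.find hex, ?_, Nat.find_spec hex⟩
    rcases Nat.eq_zero_or_pos (Nat.find hex) with h | h
    · rw [h]; simpa using hT0
    · have := Nat.find_min hex (m := Nat.find hex - 1) (by omega)
      rw [Nat.sub_add_cancel h] at this
      omega
  obtain ⟨p, hp1, hp2⟩ : ∃ p, 2 * T ≤ p * (k + 1) ∧ p * (k + 1) < 2 * T + (k + 1) := by
    refine ⟨(2 * T + k) / (k + 1), ?_, ?_⟩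
    · have := Nat.lt_mul_div_succ (2 * T + k) (Nat.succ_pos k)
      rw [Nat.succ_eq_add_one] at this
      nlinarith
    · have := Nat.div_mul_le_self (2 * T + k) (k + 1)
      omega
  have hineq := perm_arith N T (k + 1) k p rfl hS hT1 hT2 hk1 hk2 hp1 hp2
  have hp0 : 0 < p := by
    rcases Nat.eq_zero_or_pos p with rfl | h
    · omega
    · exact h
  obtain ⟨blk, b1, b2, b3⟩ := exists_buckets S x hx p (N / p + 1) (Nat.lt_mul_div_succ N hp0).le
  obtain ⟨row, r1, r2, r3⟩ := exists_buckets S y hy (4 * T) (N / (4 * T) + 1)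
    (Nat.lt_mul_div_succ N (by omega)).le
  obtain ⟨W, U, V, -, -, -, -, hW, hWc, -⟩ := greedy_blocks S x y blk row p (N / p + 1) (4 * T)
    (N / (4 * T) + 1) T k hx hy b1 b2 b3 r1 r2 r3 (by omega) hk1 hineq ((T + k) / (k + 1))
    (by
      intro b' hb'
      have := Nat.div_mul_le_self (T + k) (k + 1)
      have h2 : (b' + 1) * (k + 1) ≤ (T + k) / (k + 1) * (k + 1) := Nat.mul_le_mul_right _ hb'
      rw [add_mul] at h2
      omega)
  refine ⟨W, hW, hT1.trans ?_⟩
  have : T ≤ W.card := by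
    rw [hWc]
    have := Nat.lt_mul_div_succ (T + k) (Nat.succ_pos k)
    rw [Nat.succ_eq_add_one] at this
    nlinarith
  gcongr

lemma perm_twins {α : Type*} [Inhabited α] (S : Finset α) (x y : α → ℕ) (hx : Set.InjOn x S)
    (hy : Set.InjOn y S) (h2 : 2 ≤ S.card) :
    ∃ W, PT x y S W ∧ (S.card + 1) ^ 3 ≤ 100000 * W.card ^ 5 := by
  rcases le_or_gt S.card 1000000 with h | h
  · exact perm_small S x y hx hy h2 h
  · exact perm_large S x y hx hy h

/-- Twins in a matching with edge set `S` and endpoint map `g`, as a set of pairs of edges. -/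
def TW {α : Type*} (g : α → Bool → ℕ) (S : Finset α) (W : Finset (α × α)) : Prop :=
  (∀ w ∈ W, w.1 ∈ S ∧ w.2 ∈ S) ∧ ∀ w ∈ W, ∀ w' ∈ W,
    (∀ s s', g w.1 s < g w'.1 s' ↔ g w.2 s < g w'.2 s') ∧ w.1 ≠ w'.2

lemma matching_twins {α : Type*} [Inhabited α] (g : α → Bool → ℕ) : ∀ (n : ℕ) (S : Finset α),
    S.card = n → (∀ a ∈ S, g a false < g a true) →
    (∀ a ∈ S, ∀ b ∈ S, ∀ s s', g a s = g b s' → a = b) → 2 ≤ n →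
    ∃ W, TW g S W ∧ n ^ 3 ≤ 2 ^ 21 * W.card ^ 5 := by
  classical
  intro n
  induction n using Nat.strong_induction_on with
  | _ n ih =>
  intro S hS hlt hinj h2
  rcases le_or_gt n 128 with hn | hn
  · obtain ⟨a, ha, b, hb, hab⟩ := Finset.one_lt_card.1 (show 1 < S.card by omega)
    refine ⟨{(a, b)}, ⟨by simp [ha, hb], ?_⟩, ?_⟩
    · intro w hw w' hw'
      rw [Finset.mem_singleton] at hw hw'
      subst hw; subst hw'
      refine ⟨?_, hab⟩
      have e1 := hlt a ha
      have e2 := hlt b hb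
      intro s s'
      cases s <;> cases s' <;> simp <;> omega
    · have := Nat.pow_le_pow_left hn 3
      simpa using this
  · -- the target size of the left part
    obtain ⟨s, hs1, hs2, hs0⟩ : ∃ s, n ^ 3 ≤ 32 * s ^ 3 ∧ 32 * (s - 1) ^ 3 < n ^ 3 ∧ 0 < s := by
      have hex : ∃ s, n ^ 3 ≤ 32 * s ^ 3 := ⟨n, by omega⟩
      have hs := Nat.find_spec hex
      have hpos : 0 < Nat.find hex := by
        rcases Nat.eq_zero_or_pos (Nat.find hex) with h | h
        · rw [h] at hs
          have : 0 < n ^ 3 := by positivity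
          norm_num at hs
          omega
        · exact h
      exact ⟨Nat.find hex, hs, not_le.1 (Nat.find_min hex (by omega)), hpos⟩
    have hsn : 1000 * (s - 1) < 315 * n := by
      by_contra h
      have h1 := Nat.pow_le_pow_left (not_lt.1 h) 3
      rw [mul_pow, mul_pow] at h1
      norm_num at h1
      omega
    have hs2' : 2 ≤ s := by
      by_contra h
      have : s = 1 := by omega
      subst this
      have := Nat.pow_le_pow_left hn.le 3
      norm_num at hs1 this
      omega
    have hsltn : s < n := by omega
    let A : ℕ → Finset α := fun c => S.filter (fun a => g a true < c)
    have hexc : ∃ c, s ≤ (A c).card := by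
      refine ⟨S.sup (fun a => g a true) + 1, ?_⟩
      have : A (S.sup (fun a => g a true) + 1) = S := by
        apply Finset.filter_true_of_mem
        intro a ha
        have := Finset.le_sup (f := fun a => g a true) ha
        omega
      rw [this]; omega
    obtain ⟨c, hc⟩ : ∃ c, (A c).card = s := by
      have hspec := Nat.find_spec hexc
      set c := Nat.find hexc with hcdef
      refine ⟨c, le_antisymm ?_ hspec⟩
      have hcpos : 0 < c := by
        rcases Nat.eq_zero_or_pos c with h | h
        · rw [h] at hspec
          simp [A] at hspec
          omega
        · exact h
      have hmin := not_le.1 (Nat.find_min hexc (m := c - 1) (by omega))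
      have hsub : A c ⊆ A (c - 1) ∪ S.filter (fun a => g a true = c - 1) := by
        intro a ha
        simp only [A, Finset.mem_union, Finset.mem_filter] at ha ⊢
        rcases Nat.lt_or_ge (g a true) (c - 1) with h | h
        · exact Or.inl ⟨ha.1, h⟩
        · exact Or.inr ⟨ha.1, by omega⟩
      have hone : (S.filter (fun a => g a true = c - 1)).card ≤ 1 := by
        apply Finset.card_le_one.2
        intro a ha b hb
        rw [Finset.mem_filter] at ha hb
        exact hinj a ha.1 b hb.1 true true (ha.2.trans hb.2.symm)
      have e1 := Finset.card_le_card hsub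
      have e2 := Finset.card_union_le (A (c - 1)) (S.filter (fun a => g a true = c - 1))
      omega
    let B := S.filter (fun a => c ≤ g a false)
    let X := S.filter (fun a => g a false < c ∧ c ≤ g a true)
    have hAS : A c ⊆ S := Finset.filter_subset _ _
    have hBS : B ⊆ S := Finset.filter_subset _ _
    have hXS : X ⊆ S := Finset.filter_subset _ _
    have hAm : ∀ a ∈ A c, ∀ s, g a s < c := by
      intro a ha s
      have h1 := (Finset.mem_filter.1 ha).2
      have h2 := hlt a (hAS ha)
      cases s <;> omega
    have hBm : ∀ a ∈ B, ∀ s, c ≤ g a s := by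
      intro a ha s
      have h1 := (Finset.mem_filter.1 ha).2
      have h2 := hlt a (hBS ha)
      cases s <;> omega
    have hcov : S ⊆ A c ∪ B ∪ X := by
      intro a ha
      simp only [A, B, X, Finset.mem_union, Finset.mem_filter]
      by_cases h1 : g a true < c
      · exact Or.inl (Or.inl ⟨ha, h1⟩)
      · by_cases h2 : c ≤ g a false
        · exact Or.inl (Or.inr ⟨ha, h2⟩)
        · exact Or.inr ⟨ha, by omega, by omega⟩
    have hcovc : n ≤ s + B.card + X.card := by
      have e0 := Finset.card_le_card hcov
      have e1 := Finset.card_union_le (A c ∪ B) X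
      have e2 := Finset.card_union_le (A c) B
      omega
    rcases Nat.lt_or_ge B.card s with hB | hB
    · -- many crossing edges
      have hXc : 37 * n ≤ 100 * (X.card + 1) := by omega
      obtain ⟨W, hW, hWc⟩ := perm_twins X (fun a => g a false) (fun a => g a true)
        (fun a ha b hb h => hinj a (hXS ha) b (hXS hb) _ _ h)
        (fun a ha b hb h => hinj a (hXS ha) b (hXS hb) _ _ h) (by omega)
      refine ⟨W, ⟨fun w hw => ⟨hXS (hW.1 w hw).1, hXS (hW.1 w hw).2⟩, ?_⟩, ?_⟩
      · intro w hw w' hw'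
        obtain ⟨h1, h2, h3⟩ := hW.2 w hw w' hw'
        refine ⟨?_, h3⟩
        have m1 := (Finset.mem_filter.1 (hW.1 w hw).1).2
        have m2 := (Finset.mem_filter.1 (hW.1 w hw).2).2
        have m3 := (Finset.mem_filter.1 (hW.1 w' hw').1).2
        have m4 := (Finset.mem_filter.1 (hW.1 w' hw').2).2
        intro s s'
        cases s <;> cases s'
        · exact h1
        · exact iff_of_true (by omega) (by omega)
        · exact iff_of_false (by omega) (by omega)
        · exact h2
      · have e := Nat.pow_le_pow_left hXc 3
        rw [mul_pow, mul_pow] at e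
        norm_num at e ⊢
        omega
    · obtain ⟨W1, hW1, hc1⟩ := ih s hsltn (A c) hc (fun a ha => hlt a (hAS ha))
        (fun a ha b hb => hinj a (hAS ha) b (hAS hb)) hs2'
      have hBn : B.card < n := by
        have hdis : Disjoint (A c) B := by
          rw [Finset.disjoint_left]
          intro a ha hb
          have e1 := hAm a ha true
          have e2 := hBm a hb true
          omega
        have e := Finset.card_le_card (Finset.union_subset hAS hBS)
        rw [Finset.card_union_of_disjoint hdis] at e
        omega
      obtain ⟨W2, hW2, hc2⟩ := ih B.card hBn B rfl (fun a ha => hlt a (hBS ha))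
        (fun a ha b hb => hinj a (hBS ha) b (hBS hb)) (by omega)
      refine ⟨W1 ∪ W2, ⟨?_, ?_⟩, ?_⟩
      · intro w hw
        rcases Finset.mem_union.1 hw with hw | hw
        · exact ⟨hAS (hW1.1 w hw).1, hAS (hW1.1 w hw).2⟩
        · exact ⟨hBS (hW2.1 w hw).1, hBS (hW2.1 w hw).2⟩
      · intro w hw w' hw'
        rcases Finset.mem_union.1 hw with hw | hw <;> rcases Finset.mem_union.1 hw' with hw' | hw'
        · exact hW1.2 w hw w' hw'
        · have a1 := hAm _ (hW1.1 w hw).1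
          have a2 := hAm _ (hW1.1 w hw).2
          have b1 := hBm _ (hW2.1 w' hw').1
          have b2 := hBm _ (hW2.1 w' hw').2
          refine ⟨fun s s' => iff_of_true ((a1 s).trans_le (b1 s')) ((a2 s).trans_le (b2 s')), ?_⟩
          intro h
          have e1 := a1 true
          have e2 := b2 true
          rw [h] at e1; omega
        · have a1 := hAm _ (hW1.1 w' hw').1
          have a2 := hAm _ (hW1.1 w' hw').2
          have b1 := hBm _ (hW2.1 w hw).1
          have b2 := hBm _ (hW2.1 w hw).2
          refine ⟨fun s s' => iff_of_false ((a1 s').trans_le (b1 s)).not_gt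
            ((a2 s').trans_le (b2 s)).not_gt, ?_⟩
          intro h
          have e1 := a2 true
          have e2 := b1 true
          rw [h] at e2; omega
        · exact hW2.2 w hw w' hw'
      · have hdis : Disjoint W1 W2 := by
          rw [Finset.disjoint_left]
          intro w h1 h2
          have e1 := hAm _ (hW1.1 w h1).1 true
          have e2 := hBm _ (hW2.1 w h2).1 true
          omega
        rw [Finset.card_union_of_disjoint hdis]
        have hc2' : s ^ 3 ≤ 2 ^ 21 * W2.card ^ 5 := (Nat.pow_le_pow_left hB 3).trans hc2
        rcases le_total W1.card W2.card with h | h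
        · have e := Nat.pow_le_pow_left (show 2 * W1.card ≤ W1.card + W2.card by omega) 5
          rw [mul_pow] at e
          norm_num at e hc1 ⊢
          omega
        · have e := Nat.pow_le_pow_left (show 2 * W2.card ≤ W1.card + W2.card by omega) 5
          rw [mul_pow] at e
          norm_num at e hc2' ⊢
          omega

lemma hasTwins_of_TW (M : Finset (Finset ℕ)) (hM : IsMatching 2 M) (g : Finset ℕ → Bool → ℕ)
    (hg : ∀ e ∈ M, ∀ v, v ∈ e ↔ ∃ s, v = g e s) (W : Finset (Finset ℕ × Finset ℕ))
    (hW : TW g M W) : HasTwins M W.card := by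
  classical
  have heq : ∀ w ∈ W, ∀ w' ∈ W, ∀ s s', g w.1 s = g w'.1 s' ↔ g w.2 s = g w'.2 s' := by
    intro w hw w' hw' s s'
    have e1 := (hW.2 w hw w' hw').1 s s'
    have e2 := (hW.2 w' hw' w hw).1 s' s
    omega
  have hex : ∃ f : ℕ → ℕ, ∀ w ∈ W, ∀ s, f (g w.1 s) = g w.2 s := by
    refine ⟨fun v => if h : ∃ p : (Finset ℕ × Finset ℕ) × Bool, p.1 ∈ W ∧ v = g p.1.1 p.2 then
      g h.choose.1.2 h.choose.2 else 0, ?_⟩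
    intro w hw s
    have h : ∃ p : (Finset ℕ × Finset ℕ) × Bool, p.1 ∈ W ∧ g w.1 s = g p.1.1 p.2 :=
      ⟨(w, s), hw, rfl⟩
    dsimp only
    rw [dif_pos h]
    have hs := h.choose_spec
    exact ((heq w hw _ hs.1 s _).1 hs.2).symm
  obtain ⟨f, hf⟩ := hex
  have s1 : ∀ v, v ∈ mSupport (W.image Prod.fst) ↔ ∃ w ∈ W, ∃ s, v = g w.1 s := by
    intro v
    rw [mem_mSupport]
    constructor
    · rintro ⟨e, he, hv⟩
      obtain ⟨w, hw, rfl⟩ := Finset.mem_image.1 he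
      exact ⟨w, hw, (hg _ (hW.1 w hw).1 v).1 hv⟩
    · rintro ⟨w, hw, hv⟩
      exact ⟨w.1, Finset.mem_image_of_mem _ hw, (hg _ (hW.1 w hw).1 v).2 hv⟩
  have s2 : ∀ v, v ∈ mSupport (W.image Prod.snd) ↔ ∃ w ∈ W, ∃ s, v = g w.2 s := by
    intro v
    rw [mem_mSupport]
    constructor
    · rintro ⟨e, he, hv⟩
      obtain ⟨w, hw, rfl⟩ := Finset.mem_image.1 he
      exact ⟨w, hw, (hg _ (hW.1 w hw).2 v).1 hv⟩
    · rintro ⟨w, hw, hv⟩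
      exact ⟨w.2, Finset.mem_image_of_mem _ hw, (hg _ (hW.1 w hw).2 v).2 hv⟩
  have hext : ∀ e ∈ M, ∀ e' ∈ M, (∀ s, g e s = g e' s) → e = e' := by
    intro e he e' he' h
    ext v
    rw [hg e he, hg e' he']
    simp only [h]
  have mono : ∀ v ∈ mSupport (W.image Prod.fst), ∀ v' ∈ mSupport (W.image Prod.fst),
      v < v' → f v < f v' := by
    intro v hv v' hv' h
    obtain ⟨w, hw, s, rfl⟩ := (s1 v).1 hv
    obtain ⟨w', hw', s', rfl⟩ := (s1 v').1 hv'
    rw [hf w hw, hf w' hw']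
    exact ((hW.2 w hw w' hw').1 s s').1 h
  refine ⟨W.image Prod.fst, W.image Prod.snd, ?_, ?_, ?_, ⟨f, ⟨?_, ?_, ?_⟩, mono, ?_⟩, ?_, ?_⟩
  · intro e he
    obtain ⟨w, hw, rfl⟩ := Finset.mem_image.1 he
    exact (hW.1 w hw).1
  · intro e he
    obtain ⟨w, hw, rfl⟩ := Finset.mem_image.1 he
    exact (hW.1 w hw).2
  · rw [Finset.disjoint_left]
    intro v hv hv'
    obtain ⟨w, hw, s, h⟩ := (s1 v).1 hv
    obtain ⟨w', hw', s', h'⟩ := (s2 v).1 hv'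
    exact Finset.disjoint_left.1 (hM.2 _ (hW.1 w hw).1 _ (hW.1 w' hw').2 (hW.2 w hw w' hw').2)
      ((hg _ (hW.1 w hw).1 v).2 ⟨s, h⟩) ((hg _ (hW.1 w' hw').2 v).2 ⟨s', h'⟩)
  · intro v hv
    obtain ⟨w, hw, s, rfl⟩ := (s1 v).1 hv
    rw [hf w hw]
    exact (s2 _).2 ⟨w, hw, s, rfl⟩
  · intro v hv v' hv' h
    rcases lt_trichotomy v v' with h' | h' | h'
    · have := mono v hv v' hv' h'; omega
    · exact h'
    · have := mono v' hv' v hv h'; omega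
  · intro v hv
    obtain ⟨w, hw, s, rfl⟩ := (s2 v).1 hv
    exact ⟨g w.1 s, (s1 _).2 ⟨w, hw, s, rfl⟩, hf w hw s⟩
  · rw [Finset.image_image]
    apply Finset.image_congr
    intro w hw
    ext v
    simp only [Function.comp, Finset.mem_image]
    rw [hg _ (hW.1 w hw).2]
    constructor
    · rintro ⟨s, rfl⟩
      exact ⟨g w.1 s, (hg _ (hW.1 w hw).1 _).2 ⟨s, rfl⟩, hf w hw s⟩
    · rintro ⟨u, hu, rfl⟩
      obtain ⟨s, rfl⟩ := (hg _ (hW.1 w hw).1 _).1 hu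
      exact ⟨s, hf w hw s⟩
  · apply Finset.card_image_of_injOn
    intro w hw w' hw' h
    refine Prod.ext h (hext _ (hW.1 w hw).2 _ (hW.1 w' hw').2 fun s => ?_)
    exact (heq w hw w' hw' s s).1 (by rw [h])
  · apply Finset.card_image_of_injOn
    intro w hw w' hw' h
    refine Prod.ext (hext _ (hW.1 w hw).1 _ (hW.1 w' hw').1 fun s => ?_) h
    exact (heq w hw w' hw' s s).2 (by rw [h])

lemma lower_nat (n : ℕ) (hn : 2 ≤ n) (M : Finset (Finset ℕ)) (hM : IsOrderedMatching 2 n M) :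
    ∃ k, HasTwins M k ∧ n ^ 3 ≤ 2 ^ 21 * k ^ 5 := by
  classical
  have hpair : ∀ e ∈ M, ∃ h : Bool → ℕ, h false < h true ∧ ∀ v, v ∈ e ↔ ∃ s, v = h s := by
    intro e he
    obtain ⟨a, b, hab, rfl⟩ := Finset.card_eq_two.1 (hM.1.1 e he)
    rcases lt_or_gt_of_ne hab with h | h
    · exact ⟨fun s => if s then b else a, by simpa using h, by intro v; simp⟩
    · exact ⟨fun s => if s then a else b, by simpa using h, by intro v; simp [or_comm]⟩
  choose! g hg1 hg2 using hpair
  obtain ⟨W, hW, hc⟩ := matching_twins g n M hM.2.1 hg1 (by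
    intro a ha b hb s s' h
    by_contra hne
    exact Finset.disjoint_left.1 (hM.1.2 a ha b hb hne) ((hg2 a ha _).2 ⟨s, rfl⟩)
      ((hg2 b hb _).2 ⟨s', h⟩)) hn
  exact ⟨W.card, hasTwins_of_TW M hM.1 g hg2 W hW, hc⟩

lemma lower_bound (n : ℕ) (hn : 2 ≤ n) :
    (1 / (16 * (2 : ℝ) ^ ((1 : ℝ) / 5))) * (n : ℝ) ^ ((3 : ℝ) / 5) ≤ (minTwins 2 n : ℝ) := by
  have hne : {t | ∃ M, IsOrderedMatching 2 n M ∧ twinMax M = t}.Nonempty := by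
    have σ : Fin n × Bool ≃ Fin (2 * n) := Fintype.equivOfCardEq (by simp [mul_comm])
    exact ⟨_, _, codeMatching_isOrdered σ, rfl⟩
  obtain ⟨M, hM, hMt⟩ := Nat.sInf_mem hne
  obtain ⟨k, hk, hkn⟩ := lower_nat n hn M hM
  have hle : k ≤ minTwins 2 n := by
    have : k ≤ twinMax M := le_csSup (bddAbove_twins M) hk
    rw [hMt] at this
    exact this
  refine le_trans ?_ (Nat.cast_le.2 hle)
  refine le_of_pow_le_pow_left₀ (n := 5) (by norm_num) (by positivity) ?_
  have h2 : ((2 : ℝ) ^ ((1 : ℝ) / 5)) ^ 5 = 2 := by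
    rw [← Real.rpow_natCast, ← Real.rpow_mul (by norm_num)]; norm_num
  have h3 : ((n : ℝ) ^ ((3 : ℝ) / 5)) ^ 5 = (n : ℝ) ^ 3 := by
    rw [← Real.rpow_natCast, ← Real.rpow_mul (by positivity), ← Real.rpow_natCast]; norm_num
  rw [mul_pow, div_pow, mul_pow, h2, h3]
  have h4 : (n : ℝ) ^ 3 ≤ 2 ^ 21 * (k : ℝ) ^ 5 := by exact_mod_cast hkn
  norm_num at h4 ⊢
  linarith

end Lower

/-- For all `n ≥ 2`,
`(1/(16·2^{1/5}))·n^{3/5} ≤ t^(2)(n) ≤ (e/2^{1/3})·n^{2/3}`. -/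
theorem graph_case_bounds (n : ℕ) (hn : 2 ≤ n) :
    (1 / (16 * (2 : ℝ) ^ ((1 : ℝ) / 5))) * (n : ℝ) ^ ((3 : ℝ) / 5) ≤ (minTwins 2 n : ℝ) ∧
    (minTwins 2 n : ℝ) ≤ (Real.exp 1 / (2 : ℝ) ^ ((1 : ℝ) / 3)) * (n : ℝ) ^ ((2 : ℝ) / 3) := by
  exact ⟨lower_bound n hn, upper_bound n hn⟩
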